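/- Fix integer N ≥ 2, Θ > 0, R₀^{(c)} > 0 and R₀^{(d)} > 0. Define κ(λ) := λ·(2^{R₀^{(d)}/λ} − 1)·Θ/(N−1). Then the function λ ↦ log₂(1 + (2^{R₀^{(c)}} − 1)·(1 − κ(λ))) is strictly monotonically increasing on the set of λ > 0 for which κ(λ) < 1. -/

import Mathlib

/-!
The rate is a strictly decreasing function of the interference term `κ(λ)` wherever `κ(λ) < 1`
(which keeps the argument of the logarithm above `1`), so it suffices that
`λ ↦ λ (2 ^ (R / λ) - 1)` is strictly decreasing on `λ > 0`. For `0 < a < b` this is the strict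
Bernoulli inequality `1 + p s < (1 + s) ^ p` with `s = 2 ^ (R / b) - 1` and `p = b / a`, because
`(2 ^ (R / b)) ^ (b / a) = 2 ^ (R / a)`.
-/

open Real

theorem mul_two_rpow_div_sub_one_lt {R a b : ℝ} (hR : 0 < R) (ha : 0 < a) (hab : a < b) :
    b * ((2 : ℝ) ^ (R / b) - 1) < a * ((2 : ℝ) ^ (R / a) - 1) := by
  have hb : 0 < b := ha.trans hab
  have hs : 1 < (2 : ℝ) ^ (R / b) := Real.one_lt_rpow one_lt_two (div_pos hR hb)
  have key := one_add_mul_self_lt_rpow_one_add (s := (2 : ℝ) ^ (R / b) - 1)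
    (by linarith) (by linarith) ((one_lt_div ha).2 hab)
  rw [add_sub_cancel, ← Real.rpow_mul zero_le_two, div_mul_div_cancel₀ hb.ne'] at key
  have h := mul_lt_mul_of_pos_left key ha
  have e : a * (1 + b / a * ((2 : ℝ) ^ (R / b) - 1)) = a + b * ((2 : ℝ) ^ (R / b) - 1) := by
    field_simp
  linarith

/-- Remark 4 of the paper: for a fixed desired D2D ASE, the per-user cellular
spectral efficiency `λ ↦ log₂(1 + (2^{R₀^{(c)}} − 1)(1 − κ(λ)))` is strictly
increasing on the set of densities `λ > 0` with `κ(λ) < 1`, where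
`κ(λ) = λ(2^{R₀^{(d)}/λ} − 1)Θ/(N−1)`. -/
theorem cellular_rate_strictMono_in_density
    (N : ℕ) (Θ Rc Rd : ℝ) (hN : 2 ≤ N) (hΘ : 0 < Θ) (hRc : 0 < Rc) (hRd : 0 < Rd) :
    StrictMonoOn
      (fun lam : ℝ => Real.logb 2
        (1 + ((2 : ℝ) ^ Rc - 1) *
          (1 - lam * ((2 : ℝ) ^ (Rd / lam) - 1) * Θ / ((N : ℝ) - 1))))
      {lam : ℝ | 0 < lam ∧
        lam * ((2 : ℝ) ^ (Rd / lam) - 1) * Θ / ((N : ℝ) - 1) < 1} := by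
  intro a ha b hb hab
  obtain ⟨ha0, ha1⟩ := ha
  have hN' : (0 : ℝ) < (N : ℝ) - 1 := by
    have : (2 : ℝ) ≤ N := by exact_mod_cast hN
    linarith
  have hc : 0 < (2 : ℝ) ^ Rc - 1 := sub_pos.2 (Real.one_lt_rpow one_lt_two hRc)
  have hκ : b * ((2 : ℝ) ^ (Rd / b) - 1) * Θ / ((N : ℝ) - 1) <
      a * ((2 : ℝ) ^ (Rd / a) - 1) * Θ / ((N : ℝ) - 1) :=
    div_lt_div_of_pos_right
      (mul_lt_mul_of_pos_right (mul_two_rpow_div_sub_one_lt hRd ha0 hab) hΘ) hN'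
  refine Real.logb_lt_logb one_lt_two ?_ ?_
  · linarith [mul_pos hc (sub_pos.2 ha1)]
  · linarith [mul_lt_mul_of_pos_left (sub_lt_sub_left hκ 1) hc]
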